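/- arXiv:1406.3844 — 4 statements merged into one kernel-verified Lean document; each statement's English description precedes it below -/
import Mathlib

section
/- Given an ordered sequence of r distinct integers d_1, d_2, …, d_r with r ≥ 2 and d_i ≥ 2 for all i, there exist a positive integer n and r connected circulant graphs G_1, G_2, …, G_r, each on n vertices, such that the distinguishing number of G_i equals d_i for every i. -/
/-- A permutation of the vertices is a graph automorphism if it preserves adjacency. -/
def IsGraphAut {V : Type*} (G : SimpleGraph V) (σ : Equiv.Perm V) : Prop :=
  ∀ u v : V, G.Adj (σ u) (σ v) ↔ G.Adj u v

/-- A labeling with `r` labels is distinguishing if no nontrivial automorphism preserves it. -/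
def IsDistinguishing {V : Type*} (G : SimpleGraph V) {r : ℕ} (c : V → Fin r) : Prop :=
  ∀ σ : Equiv.Perm V, IsGraphAut G σ → (∀ v, c (σ v) = c v) → σ = Equiv.refl V

/-- The distinguishing number of a graph: the least `r` admitting an `r`-distinguishing
labeling. -/
noncomputable def distinguishingNumber {V : Type*} (G : SimpleGraph V) : ℕ :=
  sInf {r : ℕ | ∃ c : V → Fin r, IsDistinguishing G c}

/-!
Blow up every vertex of a finite graph `H` to `k` independent vertices. The `k` vertices over one
vertex of `H` are twins, so a distinguishing labeling is injective on fibres. With exactly `k`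
labels every fibre would carry each label once, and every automorphism of `H` would lift to a
label-preserving one. With `k + 1` labels a fibre may choose the label it misses; if no two vertices
of `H` are twins, automorphisms of the blow-up permute the fibres, so it is enough that the missing
labels form a distinguishing labeling of `H`. Hence `1 < D(H) ≤ k + 1` makes the distinguishing
number of the blow-up `k + 1`.

Pulling a connection set back along a surjective homomorphism blows up a circulant graph, with
fibres the size of the kernel. The cycles on at least six vertices have distinguishing number `2`,
so every nonzero multiple `n` of `6 * (d - 1)` admits a circulant graph on `ZMod n` with
distinguishing number `d`, and any finite family of values `d` has such an `n` in common.
-/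

section DistinguishingNumber

variable {V W : Type*} {G : SimpleGraph V} {H : SimpleGraph W}

theorem IsDistinguishing.of_injective {r : ℕ} {c : V → Fin r} (hc : Function.Injective c) :
    IsDistinguishing G c :=
  fun _ _ hσ => Equiv.ext fun v => hc (hσ v)

theorem IsDistinguishing.comp_injective {r s : ℕ} {c : V → Fin r} (hc : IsDistinguishing G c)
    {f : Fin r → Fin s} (hf : Function.Injective f) : IsDistinguishing G (f ∘ c) :=
  fun σ hσ hfc => hc σ hσ fun v => hf (hfc v)

theorem IsDistinguishing.comp_iso {r : ℕ} {c : W → Fin r} (hc : IsDistinguishing H c)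
    (e : G ≃g H) : IsDistinguishing G (c ∘ e) := by
  intro σ hσ hcσ
  have hconj : e.toEquiv.permCongr σ = Equiv.refl W := by
    refine hc _ (fun u v => ?_) fun v => ?_
    · change H.Adj (e (σ (e.symm u))) (e (σ (e.symm v))) ↔ _
      rw [e.map_adj_iff, hσ, e.symm.map_adj_iff]
    · exact (hcσ (e.symm v)).trans (congrArg c (e.apply_symm_apply v))
  exact e.toEquiv.permCongr.injective (by simpa using hconj)

theorem distinguishingNumber_congr (e : G ≃g H) :
    distinguishingNumber G = distinguishingNumber H :=
  congrArg sInf <| Set.ext fun _ =>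
    ⟨fun ⟨_, hc⟩ => ⟨_, hc.comp_iso e.symm⟩, fun ⟨_, hc⟩ => ⟨_, hc.comp_iso e⟩⟩

theorem distinguishingNumber_le_iff [Finite V] {r : ℕ} :
    distinguishingNumber G ≤ r ↔ ∃ c : V → Fin r, IsDistinguishing G c := by
  constructor
  · intro hr
    have hne : {r : ℕ | ∃ c : V → Fin r, IsDistinguishing G c}.Nonempty :=
      ⟨Nat.card V, Finite.equivFin V, .of_injective (Finite.equivFin V).injective⟩
    obtain ⟨c, hc⟩ := Nat.sInf_mem hne
    exact ⟨_, hc.comp_injective (Fin.castLE_injective hr)⟩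
  · exact fun hc => Nat.sInf_le hc

theorem one_lt_distinguishingNumber_iff [Finite V] :
    1 < distinguishingNumber G ↔ ∃ σ, IsGraphAut G σ ∧ σ ≠ Equiv.refl V := by
  rw [← not_le, distinguishingNumber_le_iff]
  constructor
  · intro h
    by_contra! hσ
    exact h ⟨fun _ => 0, fun σ haut _ => hσ σ haut⟩
  · rintro ⟨σ, haut, hne⟩ ⟨c, hc⟩
    exact hne (hc σ haut fun _ => Subsingleton.elim _ _)

theorem IsGraphAut.of_neighborSet_eq {σ : Equiv.Perm V}
    (hσ : ∀ v, G.neighborSet (σ v) = G.neighborSet v) : IsGraphAut G σ := by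
  have hadj (u v : V) : G.Adj (σ u) v ↔ G.Adj u v := Set.ext_iff.1 (hσ u) v
  intro u v
  rw [hadj, G.adj_comm, hadj, G.adj_comm]

theorem IsGraphAut.neighborSet_apply_eq_iff {σ : Equiv.Perm V} (hσ : IsGraphAut G σ) {u v : V} :
    G.neighborSet (σ u) = G.neighborSet (σ v) ↔ G.neighborSet u = G.neighborSet v := by
  simp only [Set.ext_iff, SimpleGraph.mem_neighborSet]
  rw [← σ.forall_congr_right]
  simp only [hσ _ _]

theorem IsDistinguishing.eq_of_neighborSet_eq {r : ℕ} {c : V → Fin r} (hc : IsDistinguishing G c)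
    {u v : V} (huv : G.neighborSet u = G.neighborSet v) (hcuv : c u = c v) : u = v := by
  classical
  exact Equiv.swap_eq_refl_iff.1 <| hc _
    (.of_neighborSet_eq (Equiv.apply_swap_eq_self huv)) (Equiv.apply_swap_eq_self hcuv)

end DistinguishingNumber

section BlowUp

variable {W κ : Type*} {H : SimpleGraph W} {k : ℕ}

/-- The blow-up of `H`, in which every vertex `w` is replaced by the independent set `{w} × κ`. It
is the lexicographic product of `H` with the edgeless graph on `κ`. -/
def blowUp (H : SimpleGraph W) (κ : Type*) : SimpleGraph (W × κ) :=
  H.comap Prod.fst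

/-- A graph pulled back along a map all of whose fibres are in bijection with `κ` is a blow-up. -/
def comapIsoBlowUp {V : Type*} (H : SimpleGraph W) (f : V → W)
    (e : ∀ w, {v // f v = w} ≃ κ) : H.comap f ≃g blowUp H κ where
  toEquiv := (Equiv.sigmaFiberEquiv f).symm.trans
    ((Equiv.sigmaCongrRight e).trans (Equiv.sigmaEquivProd W κ))
  map_rel_iff' := Iff.rfl

theorem blowUp_neighborSet (p : W × κ) :
    (blowUp H κ).neighborSet p = Prod.fst ⁻¹' H.neighborSet p.1 :=
  rfl

theorem blowUp_neighborSet_eq_iff [Nonempty κ] (hH : Function.Injective H.neighborSet)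
    {p q : W × κ} : (blowUp H κ).neighborSet p = (blowUp H κ).neighborSet q ↔ p.1 = q.1 := by
  rw [blowUp_neighborSet, blowUp_neighborSet,
    (Set.preimage_injective.2 Prod.fst_surjective).eq_iff, hH.eq_iff]

theorem IsGraphAut.exists_of_blowUp [Nonempty κ] (hH : Function.Injective H.neighborSet)
    {σ : Equiv.Perm (W × κ)} (hσ : IsGraphAut (blowUp H κ) σ) :
    ∃ τ : Equiv.Perm W, IsGraphAut H τ ∧ ∀ p, (σ p).1 = τ p.1 := by
  have hfibre (p q : W × κ) : (σ p).1 = (σ q).1 ↔ p.1 = q.1 := by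
    rw [← blowUp_neighborSet_eq_iff hH, hσ.neighborSet_apply_eq_iff, blowUp_neighborSet_eq_iff hH]
  obtain ⟨i⟩ := ‹Nonempty κ›
  let τ : Equiv.Perm W := .ofBijective (fun w => (σ (w, i)).1)
    ⟨fun u v huv => (hfibre (u, i) (v, i)).1 huv, fun w => ⟨(σ.symm (w, i)).1, by
      simpa using (hfibre ((σ.symm (w, i)).1, i) (σ.symm (w, i))).2 rfl⟩⟩
  exact ⟨τ, fun u v => hσ (u, i) (v, i), fun p => (hfibre p (p.1, i)).2 rfl⟩

theorem not_isDistinguishing_blowUp (hk : 0 < k) {α : Equiv.Perm W} (hα : IsGraphAut H α)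
    (hne : α ≠ Equiv.refl W) (c : W × Fin k → Fin k) :
    ¬ IsDistinguishing (blowUp H (Fin k)) c := by
  intro hc
  have hinj (w : W) : Function.Injective fun i => c (w, i) := fun i j hij =>
    congrArg Prod.snd (hc.eq_of_neighborSet_eq (u := (w, i)) (v := (w, j)) rfl hij)
  -- `E` replaces the position in a fibre by the label there.
  let E : W × Fin k ≃ W × Fin k := Equiv.prodShear (Equiv.refl W) fun w =>
    .ofBijective _ (Finite.injective_iff_bijective.1 (hinj w))
  let σ : Equiv.Perm (W × Fin k) := (E.trans (α.prodCongr (Equiv.refl _))).trans E.symm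
  have hσ (p : W × Fin k) : E (σ p) = (α p.1, c p) := E.apply_symm_apply _
  have hfst (p : W × Fin k) : (σ p).1 = α p.1 := congrArg Prod.fst (hσ p)
  have hlabel (p : W × Fin k) : c (σ p) = c p := congrArg Prod.snd (hσ p)
  have hid : σ = Equiv.refl _ := hc σ (fun p q => by simp [blowUp, hfst, hα _ _]) hlabel
  refine hne (Equiv.ext fun w => ?_)
  rw [← hfst (w, ⟨0, hk⟩), hid, Equiv.refl_apply, Equiv.refl_apply]

/-- The labels of the fibre over `w` are all labels but `c w`. -/
theorem IsDistinguishing.blowUp_succAbove {c : W → Fin (k + 1)} (hc : IsDistinguishing H c)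
    (hH : Function.Injective H.neighborSet) :
    IsDistinguishing (blowUp H (Fin k)) fun p => (c p.1).succAbove p.2 := by
  intro σ hσ hlabel
  refine Equiv.ext fun p => ?_
  have : Nonempty (Fin k) := ⟨p.2⟩
  obtain ⟨τ, hτ, hfst⟩ := hσ.exists_of_blowUp hH
  have hcτ (w : W) : c (τ w) = c w := by
    by_contra hne
    obtain ⟨i, hi⟩ := Fin.exists_succAbove_eq hne
    have hσi : (c (σ (w, i)).1).succAbove (σ (w, i)).2 = (c w).succAbove i := hlabel (w, i)
    rw [hfst, hi] at hσi
    exact Fin.succAbove_ne _ _ hσi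
  have hfibre : (σ p).1 = p.1 := by rw [hfst, hc τ hτ hcτ, Equiv.refl_apply]
  have hσp : (c (σ p).1).succAbove (σ p).2 = (c p.1).succAbove p.2 := hlabel p
  rw [hfibre] at hσp
  exact Prod.ext hfibre (Fin.succAbove_right_injective hσp)

theorem distinguishingNumber_blowUp [Finite W] (hH : Function.Injective H.neighborSet)
    (hlower : 1 < distinguishingNumber H) (hupper : distinguishingNumber H ≤ k + 1) :
    distinguishingNumber (blowUp H (Fin k)) = k + 1 := by
  obtain ⟨α, hα, hne⟩ := one_lt_distinguishingNumber_iff.1 hlower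
  obtain ⟨c, hc⟩ := distinguishingNumber_le_iff.1 hupper
  refine le_antisymm (distinguishingNumber_le_iff.2 ⟨_, hc.blowUp_succAbove hH⟩) ?_
  rw [Nat.add_one_le_iff, ← not_le, distinguishingNumber_le_iff]
  rintro ⟨c', hc'⟩
  exact not_isDistinguishing_blowUp (by omega) hα hne c' hc'

end BlowUp

section Circulant

open SimpleGraph

variable {Γ Δ : Type*} [AddGroup Γ] [AddGroup Δ]

theorem one_lt_distinguishingNumber_circulantGraph [Finite Γ] [Nontrivial Γ] (A : Set Γ) :
    1 < distinguishingNumber (circulantGraph A) := by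
  obtain ⟨g, hg⟩ := exists_ne (0 : Γ)
  refine one_lt_distinguishingNumber_iff.2
    ⟨Equiv.addRight g, fun _ _ => circulantGraph_adj_translate, fun h => hg ?_⟩
  simpa using Equiv.congr_fun h 0

theorem connected_circulantGraph {A : Set Γ} (hA : AddSubgroup.closure A = ⊤) :
    (circulantGraph A).Connected := by
  have htranslate {u v : Γ} (d : Γ) (huv : (circulantGraph A).Reachable u v) :
      (circulantGraph A).Reachable (u + d) (v + d) :=
    huv.map ⟨(· + d), circulantGraph_adj_translate.2⟩
  have hzero (v : Γ) : (circulantGraph A).Reachable 0 v := by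
    have hv : v ∈ AddSubgroup.closure A := hA ▸ AddSubgroup.mem_top v
    induction hv using AddSubgroup.closure_induction with
    | mem a ha =>
      obtain rfl | ha0 := eq_or_ne 0 a
      · rfl
      · exact Adj.reachable (by simp [ha0, ha])
    | zero => rfl
    | add u v _ _ hu hv => exact hv.trans (by simpa using htranslate v hu)
    | neg v _ hv => exact (by simpa using htranslate (-v) hv : Reachable _ (-v) 0).symm
  exact .mk fun u v => (hzero u).symm.trans (hzero v)

theorem circulantGraph_preimage (q : Γ →+ Δ) {A : Set Δ} (hA : 0 ∉ A) :
    circulantGraph (q ⁻¹' A) = (circulantGraph A).comap q := by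
  ext u v
  simp only [circulantGraph_adj, comap_adj, Set.mem_preimage, map_sub]
  refine and_congr_left fun hmem => ⟨?_, mt (congrArg q)⟩
  rintro - huv
  simp [huv, hA] at hmem

theorem distinguishingNumber_circulantGraph_preimage [Finite Γ] [Nontrivial Δ] {q : Γ →+ Δ}
    (hq : Function.Surjective q) {A : Set Δ} (hA : 0 ∉ A)
    (hinj : Function.Injective (circulantGraph A).neighborSet)
    (hle : distinguishingNumber (circulantGraph A) ≤ Nat.card q.ker + 1) :
    distinguishingNumber (circulantGraph (q ⁻¹' A)) = Nat.card q.ker + 1 := by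
  have : Finite Δ := .of_surjective q hq
  let e (w : Δ) : {v // q v = w} ≃ Fin (Nat.card q.ker) :=
    (q.fiberEquivKerOfSurjective hq w).trans (Finite.equivFin q.ker)
  rw [circulantGraph_preimage q hA, distinguishingNumber_congr (comapIsoBlowUp _ q e)]
  exact distinguishingNumber_blowUp hinj (one_lt_distinguishingNumber_circulantGraph A) hle

end Circulant

section Cycle

open SimpleGraph

/-- The cycle through the residues modulo `m` in their cyclic order. Unlike `SimpleGraph.cycleGraph`
it lives on `ZMod m`, and its connection set is symmetric. -/
abbrev zmodCycle (m : ℕ) : SimpleGraph (ZMod m) :=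
  circulantGraph {1, -1}

variable {m : ℕ}

theorem zmodCycle_adj [Nontrivial (ZMod m)] {u v : ZMod m} :
    (zmodCycle m).Adj u v ↔ u = v + 1 ∨ u = v - 1 := by
  have := one_ne_zero (α := ZMod m)
  simp only [circulantGraph_adj, Set.mem_insert_iff, Set.mem_singleton_iff]
  grind

theorem zmodCycle_neighborSet_injective (h4 : (4 : ZMod m) ≠ 0) :
    Function.Injective (zmodCycle m).neighborSet := by
  have : Nontrivial (ZMod m) := nontrivial_of_ne _ _ h4
  intro u v huv
  have hadj (w : ZMod m) : (zmodCycle m).Adj w u ↔ (zmodCycle m).Adj w v := by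
    rw [adj_comm, (zmodCycle m).adj_comm w v]
    exact Set.ext_iff.1 huv w
  have hsucc : u + 1 = v + 1 ∨ u + 1 = v - 1 :=
    zmodCycle_adj.1 ((hadj _).1 (zmodCycle_adj.2 (.inl rfl)))
  have hpred : u - 1 = v + 1 ∨ u - 1 = v - 1 :=
    zmodCycle_adj.1 ((hadj _).1 (zmodCycle_adj.2 (.inr rfl)))
  rcases hsucc with hsucc | hsucc
  · exact add_right_cancel hsucc
  rcases hpred with hpred | hpred
  · exact absurd (by linear_combination hsucc - hpred) h4
  · exact sub_left_injective hpred

theorem IsGraphAut.eq_refl_of_zmodCycle [NeZero m] [Nontrivial (ZMod m)]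
    {σ : Equiv.Perm (ZMod m)} (hσ : IsGraphAut (zmodCycle m) σ) (h0 : σ 0 = 0) (h1 : σ 1 = 1) :
    σ = Equiv.refl (ZMod m) := by
  have hnat (j : ℕ) : σ j = j ∧ σ (j + 1) = j + 1 := by
    induction j with
    | zero => simp [h0, h1]
    | succ j ih =>
      obtain ⟨hj, hj1⟩ := ih
      push_cast
      refine ⟨hj1, ?_⟩
      have hadj := (hσ (j + 1 + 1) (j + 1)).2 (zmodCycle_adj.2 (.inl rfl))
      rw [hj1, zmodCycle_adj, add_sub_cancel_right] at hadj
      refine hadj.elim id fun hback => ?_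
      rw [σ.injective (hback.trans hj.symm), hj]
  exact Equiv.ext fun v => by simpa using (hnat v.val).1

theorem natCast_zmod_ne_zero {j : ℕ} (hj : 0 < j) (hjm : j < m) : (j : ZMod m) ≠ 0 :=
  mt (ZMod.natCast_eq_zero_iff j m).1 (Nat.not_dvd_of_pos_of_lt hj hjm)

/-- Among the marked vertices `0, 1, 3` only `0` and `1` are adjacent, and they cannot be exchanged
because `1` has a common neighbour with `3` while `0` has none. -/
theorem IsGraphAut.fixes_of_mapsTo_zmodCycle (hm : 6 ≤ m) {σ : Equiv.Perm (ZMod m)}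
    (hσ : IsGraphAut (zmodCycle m) σ) (hmarked : Set.MapsTo σ {0, 1, 3} {0, 1, 3}) :
    σ 0 = 0 ∧ σ 1 = 1 := by
  have h1 : (1 : ZMod m) ≠ 0 := mod_cast natCast_zmod_ne_zero (j := 1) (by omega) (by omega)
  have h2 : (2 : ZMod m) ≠ 0 := mod_cast natCast_zmod_ne_zero (j := 2) (by omega) (by omega)
  have h3 : (3 : ZMod m) ≠ 0 := mod_cast natCast_zmod_ne_zero (j := 3) (by omega) (by omega)
  have h4 : (4 : ZMod m) ≠ 0 := mod_cast natCast_zmod_ne_zero (j := 4) (by omega) (by omega)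
  have h5 : (5 : ZMod m) ≠ 0 := mod_cast natCast_zmod_ne_zero (j := 5) (by omega) (by omega)
  have : Nontrivial (ZMod m) := nontrivial_of_ne _ _ h1
  have hsucc (v : ZMod m) : σ (v + 1) = σ v + 1 ∨ σ (v + 1) = σ v - 1 :=
    zmodCycle_adj.1 ((hσ _ _).2 (zmodCycle_adj.2 (.inl rfl)))
  have hadj01 : σ 1 = σ 0 + 1 ∨ σ 1 = σ 0 - 1 := by simpa using hsucc 0
  have hadj12 : σ 2 = σ 1 + 1 ∨ σ 2 = σ 1 - 1 := by simpa [one_add_one_eq_two] using hsucc 1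
  have hadj23 : σ 3 = σ 2 + 1 ∨ σ 3 = σ 2 - 1 := by simpa [two_add_one_eq_three] using hsucc 2
  have h0mem : σ 0 = 0 ∨ σ 0 = 1 ∨ σ 0 = 3 := hmarked (by simp)
  have h1mem : σ 1 = 0 ∨ σ 1 = 1 ∨ σ 1 = 3 := hmarked (by simp)
  have h3mem : σ 3 = 0 ∨ σ 3 = 1 ∨ σ 3 = 3 := hmarked (by simp)
  have hfix_or_swap : σ 0 = 0 ∧ σ 1 = 1 ∨ σ 0 = 1 ∧ σ 1 = 0 := by grind
  refine hfix_or_swap.resolve_right fun ⟨hσ0, hσ1⟩ => ?_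
  have hσ3 : σ 3 = 3 := by
    refine (h3mem.resolve_left fun h => ?_).resolve_left fun h => ?_
    · exact h2 (by linear_combination σ.injective (h.trans hσ1.symm))
    · exact h3 (σ.injective (h.trans hσ0.symm))
  rw [hσ1] at hadj12
  rw [hσ3] at hadj23
  grind

theorem distinguishingNumber_zmodCycle_le_two (hm : 6 ≤ m) :
    distinguishingNumber (zmodCycle m) ≤ 2 := by
  classical
  have : NeZero m := ⟨by omega⟩
  have : Fact (1 < m) := ⟨by omega⟩
  let c : ZMod m → Fin 2 := fun v => if v ∈ ({0, 1, 3} : Set (ZMod m)) then 1 else 0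
  have hc (v : ZMod m) : c v = 1 ↔ v ∈ ({0, 1, 3} : Set (ZMod m)) := by
    simp only [c, ite_eq_left_iff, zero_ne_one, imp_false, not_not]
  refine distinguishingNumber_le_iff.2 ⟨c, fun σ hσ hcσ => ?_⟩
  have hmarked : Set.MapsTo σ {0, 1, 3} {0, 1, 3} := fun v hv =>
    (hc _).1 ((hcσ v).trans ((hc v).2 hv))
  obtain ⟨h0, h1⟩ := hσ.fixes_of_mapsTo_zmodCycle hm hmarked
  exact hσ.eq_refl_of_zmodCycle h0 h1

end Cycle

section ZMod

open SimpleGraph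

variable {m n : ℕ}

theorem connected_circulantGraph_zmod {A : Set (ZMod n)} (hA : 1 ∈ A) :
    (circulantGraph A).Connected := by
  refine connected_circulantGraph (eq_top_iff.2 fun v _ => ?_)
  rw [← ZMod.intCast_zmod_cast v, ← zsmul_one]
  exact zsmul_mem (AddSubgroup.subset_closure hA) _

theorem card_ker_zmodCastHom [NeZero n] (h : m ∣ n) :
    Nat.card (ZMod.castHom h (ZMod m)).toAddMonoidHom.ker = n / m := by
  have hrange : (ZMod.castHom h (ZMod m)).toAddMonoidHom.range = ⊤ :=
    AddMonoidHom.range_eq_top.2 (ZMod.castHom_surjective h)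
  have hcard := (ZMod.castHom h (ZMod m)).toAddMonoidHom.ker.card_mul_index
  rw [AddSubgroup.index_ker, hrange, AddSubgroup.card_top, Nat.card_zmod, Nat.card_zmod] at hcard
  exact Nat.eq_div_of_mul_eq_left (ne_zero_of_dvd_ne_zero (NeZero.ne n) h) hcard

theorem distinguishingNumber_circulantGraph_castHom_preimage [NeZero n] (hm : 6 ≤ m) (h : m ∣ n) :
    distinguishingNumber (circulantGraph (ZMod.castHom h (ZMod m) ⁻¹' {1, -1})) = n / m + 1 := by
  have : Fact (1 < m) := ⟨by omega⟩
  have h4 : (4 : ZMod m) ≠ 0 := mod_cast natCast_zmod_ne_zero (j := 4) (by omega) (by omega)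
  have hquot : 0 < n / m := Nat.div_pos (Nat.le_of_dvd (NeZero.pos n) h) (by omega)
  rw [← card_ker_zmodCastHom h] at hquot ⊢
  exact distinguishingNumber_circulantGraph_preimage
    (q := (ZMod.castHom h (ZMod m)).toAddMonoidHom) (ZMod.castHom_surjective h) (by simp)
    (zmodCycle_neighborSet_injective h4)
    ((distinguishingNumber_zmodCycle_le_two hm).trans (by omega))

theorem exists_connected_circulantGraph_distinguishingNumber_eq [NeZero n] {k : ℕ}
    (hk : 6 * k ∣ n) :
    ∃ A : Set (ZMod n), 0 ∉ A ∧ (∀ a ∈ A, -a ∈ A) ∧ (circulantGraph A).Connected ∧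
      distinguishingNumber (circulantGraph A) = k + 1 := by
  obtain ⟨t, hn⟩ := hk
  have ht : 0 < t := Nat.pos_of_ne_zero fun h => NeZero.ne n (by simp [hn, h])
  have hmul : n = k * (6 * t) := by rw [hn]; ring
  have hdvd : 6 * t ∣ n := Dvd.intro_left k hmul.symm
  have : Fact (1 < 6 * t) := ⟨by omega⟩
  refine ⟨ZMod.castHom hdvd (ZMod (6 * t)) ⁻¹' {1, -1}, by simp, fun a ha => ?_,
    connected_circulantGraph_zmod (.inl (map_one _)), ?_⟩
  · rw [Set.mem_preimage, map_neg]
    exact ha.symm.imp neg_eq_iff_eq_neg.2 (congrArg Neg.neg)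
  · rw [distinguishingNumber_circulantGraph_castHom_preimage (by omega) hdvd,
      Nat.div_eq_of_eq_mul_left (by omega) hmul]

end ZMod

theorem stmt_1_general {ι : Type*} [Finite ι] (d : ι → ℕ) (hd2 : ∀ i, 2 ≤ d i) :
    ∃ n : ℕ, 0 < n ∧ ∃ A : ι → Set (ZMod n),
      ∀ i, (0 : ZMod n) ∉ A i ∧ (∀ a ∈ A i, -a ∈ A i) ∧
        (SimpleGraph.circulantGraph (A i)).Connected ∧
        distinguishingNumber (SimpleGraph.circulantGraph (A i)) = d i := by
  have := Fintype.ofFinite ι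
  let n := 6 * ∏ i, (d i - 1)
  have hn : 0 < n :=
    Nat.mul_pos (by norm_num) (Finset.prod_pos fun i _ => Nat.sub_pos_of_lt (hd2 i))
  have : NeZero n := ⟨hn.ne'⟩
  have hdvd (i : ι) : 6 * (d i - 1) ∣ n :=
    mul_dvd_mul_left 6 (Finset.dvd_prod_of_mem (fun i => d i - 1) (Finset.mem_univ i))
  choose A hA using fun i => exists_connected_circulantGraph_distinguishingNumber_eq (hdvd i)
  refine ⟨n, hn, A, fun i => ?_⟩
  rw [← Nat.sub_add_cancel (one_le_two.trans (hd2 i))]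
  exact hA i

theorem stmt_1 (r : ℕ) (hr : 2 ≤ r) (d : Fin r → ℕ)
    (hdist : Function.Injective d) (hd2 : ∀ i, 2 ≤ d i) :
    ∃ n : ℕ, 0 < n ∧ ∃ A : Fin r → Set (ZMod n),
      ∀ i, (0 : ZMod n) ∉ A i ∧ (∀ a ∈ A i, -a ∈ A i) ∧
        (SimpleGraph.circulantGraph (A i)).Connected ∧
        distinguishingNumber (SimpleGraph.circulantGraph (A i)) = d i :=
  stmt_1_general d hd2
end

section
/- For all integers m ≥ 2 and p ≥ 2, the sets M_i = {i + r·p : 0 ≤ r ≤ m−1} for i = 0, 1, …, p−1 form a partition of the vertex set ℤ_{mp} of the circulant graph C(m,p) into p sets, each of size m, each an independent set, and each a module of C(m,p). -/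
/-- The jump set `A = {p-1+r·p, p+1+r·p : 0 ≤ r ≤ m-1}` inside `ℤ_{mp}`. -/
def jumpSet (m p : ℕ) : Set (ZMod (m * p)) :=
  {a | ∃ r < m, a = ((p - 1 + r * p : ℕ) : ZMod (m * p)) ∨
                a = ((p + 1 + r * p : ℕ) : ZMod (m * p))}

/-- The circulant graph `C(m,p)` on vertex set `ℤ_{mp}`: `i` and `j` are adjacent iff
`j - i (mod mp)` lies in the jump set. -/
def circC (m p : ℕ) : SimpleGraph (ZMod (m * p)) :=
  SimpleGraph.circulantGraph (jumpSet m p)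

/-- The set `M_i = {i + r·p : 0 ≤ r ≤ m-1}` in `ℤ_{mp}`. -/
def Mset (m p i : ℕ) : Set (ZMod (m * p)) :=
  {v | ∃ r < m, v = ((i + r * p : ℕ) : ZMod (m * p))}

/-- `M` is a module of `G`: every vertex outside `M` is adjacent to all of `M` or to
none of `M`. -/
def SimpleGraph.IsModuleSet {V : Type*} (G : SimpleGraph V) (M : Set V) : Prop :=
  ∀ y ∉ M, (∀ x ∈ M, G.Adj x y) ∨ (∀ x ∈ M, ¬ G.Adj x y)

section Comap

variable {V W : Type*} {f : V → W}

lemma not_adj_comap_of_eq (G : SimpleGraph W) {u v : V} (h : f u = f v) :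
    ¬ (G.comap f).Adj u v := by
  rw [SimpleGraph.comap_adj, h]
  exact G.irrefl

lemma isModuleSet_comap_preimage_singleton (G : SimpleGraph W) (w : W) :
    (G.comap f).IsModuleSet (f ⁻¹' {w}) := by
  intro y _
  by_cases h : G.Adj w (f y)
  · refine Or.inl fun x (hx : f x = w) => ?_
    rwa [SimpleGraph.comap_adj, hx]
  · refine Or.inr fun x (hx : f x = w) => ?_
    rwa [SimpleGraph.comap_adj, hx]

end Comap

lemma circulantGraph_preimage_s3 {A B : Type*} [AddGroup A] [AddGroup B] (f : A →+ B) {S : Set B}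
    (hS : 0 ∉ S) :
    SimpleGraph.circulantGraph (f ⁻¹' S) = (SimpleGraph.circulantGraph S).comap f := by
  ext u v
  simp only [SimpleGraph.comap_adj, SimpleGraph.circulantGraph_adj, Set.mem_preimage, map_sub]
  refine and_congr_left fun hjump => ⟨fun _ hfuv => ?_, fun hfuv huv => hfuv (congrArg f huv)⟩
  simp only [hfuv, sub_self, hS, or_self] at hjump

/-- Reduction modulo `p`, from `ℤ_{mp}` to `ℤ_p`. Its fibres are the sets `M_i`. -/
def residue (m p : ℕ) : ZMod (m * p) →+* ZMod p :=
  ZMod.castHom (Dvd.intro_left m rfl) (ZMod p)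

section Residue

variable {m p : ℕ}

lemma Mset_eq_preimage_residue [NeZero m] (i : ℕ) :
    Mset m p i = residue m p ⁻¹' {(i : ZMod p)} := by
  ext v
  constructor
  · rintro ⟨r, -, rfl⟩
    simp
  · intro hv
    obtain ⟨a, rfl⟩ := ZMod.intCast_surjective v
    have hai : ((i : ℤ) : ZMod p) = (a : ZMod p) := by simpa using hv.symm
    obtain ⟨q, hq⟩ := (ZMod.intCast_eq_intCast_iff_dvd_sub _ _ p).1 hai
    have hqr : q ≡ (q : ZMod m).val [ZMOD m] := by
      rw [ZMod.val_intCast]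
      exact (Int.mod_modEq q m).symm
    have ha : a ≡ i + (q : ZMod m).val * p [ZMOD (m * p : ℕ)] := by
      rw [show a = i + q * p by linarith, Nat.cast_mul]
      exact (hqr.mul_right' (c := (p : ℤ))).add_left i
    exact ⟨(q : ZMod m).val, ZMod.val_lt _,
      by exact_mod_cast (ZMod.intCast_eq_intCast_iff _ _ _).2 ha⟩

lemma ncard_Mset [NeZero p] (i : ℕ) : (Mset m p i).ncard = m := by
  have himage : Mset m p i =
      Set.image (fun r : ℕ => ((i + r * p : ℕ) : ZMod (m * p))) (Finset.range m) := by
    ext v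
    simp [Mset, eq_comm]
  rw [himage, Set.InjOn.ncard_image, Set.ncard_coe_finset, Finset.card_range]
  intro r hr s hs h
  have hmod : r * p ≡ s * p [MOD m * p] :=
    Nat.ModEq.add_left_cancel' i ((ZMod.natCast_eq_natCast_iff _ _ _).1 h)
  exact (Nat.ModEq.mul_right_cancel' (NeZero.ne p) hmod).eq_of_lt_of_lt
    (Finset.mem_range.1 hr) (Finset.mem_range.1 hs)

lemma disjoint_Mset [NeZero m] {i j : ℕ} (hi : i < p) (hj : j < p) (hij : i ≠ j) :
    Disjoint (Mset m p i) (Mset m p j) := by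
  have hcast : (i : ZMod p) ≠ j := fun h =>
    hij (((ZMod.natCast_eq_natCast_iff _ _ _).1 h).eq_of_lt_of_lt hi hj)
  simp only [Mset_eq_preimage_residue]
  exact (Set.disjoint_singleton.2 hcast).preimage _

lemma iUnion_Mset [NeZero m] [NeZero p] : (⋃ i < p, Mset m p i) = Set.univ := by
  refine Set.eq_univ_of_forall fun v => Set.mem_iUnion₂.2
    ⟨(residue m p v).val, ZMod.val_lt _, ?_⟩
  rw [Mset_eq_preimage_residue]
  exact (ZMod.natCast_zmod_val _).symm

lemma jumpSet_eq_preimage_residue [NeZero m] [NeZero p] :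
    jumpSet m p = residue m p ⁻¹' {-1, 1} := by
  have hunion : jumpSet m p = Mset m p (p - 1) ∪ Mset m p (p + 1) := by
    ext a
    simp only [jumpSet, Mset, Set.mem_union, Set.mem_ofPred_eq, ← exists_or, and_or_left]
  have hneg : ((p - 1 : ℕ) : ZMod p) = -1 := by
    simp [Nat.cast_sub (NeZero.one_le (n := p))]
  have hone : ((p + 1 : ℕ) : ZMod p) = 1 := by simp
  rw [hunion, Mset_eq_preimage_residue, Mset_eq_preimage_residue, hneg, hone,
    ← Set.preimage_union, Set.singleton_union]

lemma circC_eq_comap_residue [NeZero m] [Fact (1 < p)] :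
    circC m p = (SimpleGraph.circulantGraph {-1, 1}).comap (residue m p) := by
  have : NeZero p := ⟨(zero_lt_one.trans Fact.out).ne'⟩
  rw [circC, jumpSet_eq_preimage_residue]
  exact circulantGraph_preimage_s3 (residue m p).toAddMonoidHom (by simp)

end Residue

theorem stmt_3 (m p : ℕ) (hm : 2 ≤ m) (hp : 2 ≤ p) :
    (∀ i < p, (Mset m p i).ncard = m ∧
      (∀ u ∈ Mset m p i, ∀ v ∈ Mset m p i, ¬ (circC m p).Adj u v) ∧
      (circC m p).IsModuleSet (Mset m p i)) ∧
    (∀ i < p, ∀ j < p, i ≠ j → Disjoint (Mset m p i) (Mset m p j)) ∧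
    (⋃ i < p, Mset m p i) = Set.univ := by
  have : NeZero m := ⟨by omega⟩
  have : NeZero p := ⟨by omega⟩
  have : Fact (1 < p) := ⟨hp⟩
  refine ⟨fun i _ => ⟨ncard_Mset i, ?_, ?_⟩,
    fun i hi j hj hij => disjoint_Mset hi hj hij, iUnion_Mset⟩
  · rw [Mset_eq_preimage_residue, circC_eq_comap_residue]
    exact fun u hu v hv => not_adj_comap_of_eq _ (hu.trans hv.symm)
  · rw [Mset_eq_preimage_residue, circC_eq_comap_residue]
    exact isModuleSet_comap_preimage_singleton _ _
end

section
/- For all integers m ≥ 2 and p ≥ 2 and each i with 0 ≤ i ≤ p−1, every permutation of the vertex set ℤ_{mp} of the circulant graph C(m,p) that permutes the set M_i = {i + r·p : 0 ≤ r ≤ m−1} and fixes every vertex outside M_i is an automorphism of C(m,p). -/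
theorem isGraphAut_circulantGraph_preimage {G H : Type*} [AddGroup G] [AddGroup H] (f : G →+ H)
    (s : Set H) {σ : Equiv.Perm G} (hσ : ∀ v, f (σ v) = f v) :
    IsGraphAut (SimpleGraph.circulantGraph (f ⁻¹' s)) σ := by
  intro u v
  simp only [SimpleGraph.circulantGraph_adj, Set.mem_preimage, map_sub, hσ, σ.injective.ne_iff]

theorem map_apply_eq_of_mapsTo_fiber {α β : Type*} {f : α → β} {b : β} {σ : α → α}
    (hmaps : Set.MapsTo σ (f ⁻¹' {b}) (f ⁻¹' {b})) (hfix : ∀ v ∉ f ⁻¹' {b}, σ v = v) (v : α) :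
    f (σ v) = f v := by
  by_cases hv : v ∈ f ⁻¹' {b}
  · exact (hmaps hv).trans hv.symm
  · rw [hfix v hv]

/-- Reduction modulo `p` on the vertices of `C(m,p)`, the projection whose fibres are the `M_i`. -/
def reduction (m p : ℕ) : ZMod (m * p) →+* ZMod p :=
  ZMod.castHom (dvd_mul_left p m) (ZMod p)

theorem Mset_eq_preimage_reduction (m p i : ℕ) [NeZero m] :
    Mset m p i = reduction m p ⁻¹' {(i : ZMod p)} := by
  ext v
  constructor
  · rintro ⟨r, -, rfl⟩
    simp
  · intro hv
    obtain ⟨z, rfl⟩ := ZMod.intCast_surjective v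
    have hz : ((i : ℤ) : ZMod p) = (z : ZMod p) := by simpa [eq_comm] using hv
    obtain ⟨k, hk⟩ := (ZMod.intCast_eq_intCast_iff_dvd_sub _ _ _).1 hz
    -- `z = i + k * p`, and changing `k` by a multiple of `m` does not change this modulo `m * p`.
    refine ⟨(k : ZMod m).val, ZMod.val_lt _, ?_⟩
    have hmod : ((m * p : ℕ) : ℤ) ∣ (k - (k : ZMod m).val) * p := by
      rw [ZMod.val_intCast, Nat.cast_mul]
      exact mul_dvd_mul_right (Int.dvd_self_sub_emod) _
    rw [← Int.cast_natCast, eq_comm, ZMod.intCast_eq_intCast_iff_dvd_sub]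
    convert hmod using 1
    push_cast
    linear_combination hk

theorem jumpSet_eq_preimage_reduction (m p : ℕ) [NeZero m] :
    jumpSet m p = reduction m p ⁻¹' {((p - 1 : ℕ) : ZMod p), ((p + 1 : ℕ) : ZMod p)} := by
  have hunion : jumpSet m p = Mset m p (p - 1) ∪ Mset m p (p + 1) := by
    ext a
    simp only [jumpSet, Mset, Set.mem_union, Set.mem_ofPred_eq, and_or_left, exists_or]
  rw [hunion, Mset_eq_preimage_reduction, Mset_eq_preimage_reduction, ← Set.preimage_union,
    Set.singleton_union]

theorem isGraphAut_circC_of_reduction_eq {m p : ℕ} [NeZero m] {σ : Equiv.Perm (ZMod (m * p))}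
    (hσ : ∀ v, reduction m p (σ v) = reduction m p v) : IsGraphAut (circC m p) σ := by
  rw [circC, jumpSet_eq_preimage_reduction]
  exact isGraphAut_circulantGraph_preimage (reduction m p).toAddMonoidHom _ hσ

theorem stmt_4 (m p : ℕ) (hm : 2 ≤ m) (hp : 2 ≤ p) (i : ℕ) (hi : i < p)
    (σ : Equiv.Perm (ZMod (m * p)))
    (hmaps : ∀ v ∈ Mset m p i, σ v ∈ Mset m p i)
    (hfix : ∀ v ∉ Mset m p i, σ v = v) :
    IsGraphAut (circC m p) σ := by
  have : NeZero m := ⟨by omega⟩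
  rw [Mset_eq_preimage_reduction] at hmaps hfix
  exact isGraphAut_circC_of_reduction_eq (map_apply_eq_of_mapsTo_fiber hmaps hfix)
end

section
/- Let m ≥ 2 and p ≥ 2 be integers. If a vertex labeling c of the circulant graph C(m,p) assigns the same label to two distinct vertices belonging to the same set M_i = {i + r·p : 0 ≤ r ≤ m−1} for some 0 ≤ i ≤ p−1, then c is not a distinguishing labeling, i.e. there exists a nontrivial automorphism σ of C(m,p) with c ∘ σ = c. -/
/-- Two vertices are twins if they have the same neighbours apart from themselves; twins may or may
not be adjacent to each other. -/
def AreTwins {V : Type*} (G : SimpleGraph V) (u v : V) : Prop :=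
  ∀ w, w ≠ u → w ≠ v → (G.Adj u w ↔ G.Adj v w)

namespace AreTwins

variable {V : Type*} {G : SimpleGraph V} {u v : V}

theorem isGraphAut_swap [DecidableEq V] (h : AreTwins G u v) : IsGraphAut G (Equiv.swap u v) := by
  intro x y
  -- A pair with one end in `{u, v}` is covered by `h`; the pair `u, v` itself is only reversed.
  simp only [Equiv.swap_apply_def]
  grind [AreTwins, G.adj_comm, G.irrefl]

theorem exists_isGraphAut_ne_refl_of_label_eq {α : Type*} {c : V → α} (h : AreTwins G u v)
    (huv : u ≠ v) (hc : c u = c v) :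
    ∃ σ : Equiv.Perm V, IsGraphAut G σ ∧ σ ≠ Equiv.refl V ∧ ∀ w, c (σ w) = c w := by
  classical
  exact ⟨Equiv.swap u v, h.isGraphAut_swap, mt Equiv.swap_eq_refl_iff.mp huv,
    Equiv.apply_swap_eq_self hc⟩

end AreTwins

open scoped Pointwise

theorem areTwins_circulantGraph_of_sub_mem_stabilizer {Γ : Type*} [AddCommGroup Γ]
    {s : Set Γ} {u v : Γ} (h : v - u ∈ AddAction.stabilizer Γ s) :
    AreTwins (SimpleGraph.circulantGraph s) u v := by
  intro w hwu hwv
  have vadd_mem_iff (x : Γ) : (v - u) + x ∈ s ↔ x ∈ s := AddAction.mem_stabilizer_set.mp h x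
  have hout : v - w ∈ s ↔ u - w ∈ s := by simpa using vadd_mem_iff (u - w)
  have hin : w - u ∈ s ↔ w - v ∈ s := by simpa using vadd_mem_iff (w - v)
  simp only [SimpleGraph.circulantGraph_adj, hout, hin, hwu.symm, hwv.symm, not_false_eq_true,
    true_and]

theorem mem_zmultiples_iff_exists_lt_nsmul_eq {A : Type*} [AddGroup A] {n : ℕ} {x a : A}
    (hn : n ≠ 0) (hx : n • x = 0) : a ∈ AddSubgroup.zmultiples x ↔ ∃ r < n, r • x = a := by
  have hfin : IsOfFinAddOrder x :=
    isOfFinAddOrder_iff_nsmul_eq_zero.mpr ⟨n, Nat.pos_of_ne_zero hn, hx⟩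
  rw [← hfin.mem_multiples_iff_mem_zmultiples, AddSubmonoid.mem_multiples_iff]
  constructor
  · rintro ⟨k, rfl⟩
    exact ⟨k % n, Nat.mod_lt k (Nat.pos_of_ne_zero hn), (nsmul_eq_mod_nsmul k hx).symm⟩
  · rintro ⟨r, -, rfl⟩
    exact ⟨r, rfl⟩

section ResidueClasses

variable {m p i : ℕ}

theorem jumpSet_eq_Mset_union_Mset : jumpSet m p = Mset m p (p - 1) ∪ Mset m p (p + 1) := by
  ext a
  simp only [jumpSet, Mset, Set.mem_ofPred_eq, Set.mem_union, and_or_left, exists_or]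

theorem Mset_eq_vadd_zmultiples (hm : m ≠ 0) :
    Mset m p i =
      (i : ZMod (m * p)) +ᵥ (AddSubgroup.zmultiples (p : ZMod (m * p)) : Set (ZMod (m * p))) := by
  have hmp : m • (p : ZMod (m * p)) = 0 := by
    rw [nsmul_eq_mul, ← Nat.cast_mul, ZMod.natCast_self]
  ext a
  simp only [Mset, Set.mem_ofPred_eq, Set.mem_vadd_set, SetLike.mem_coe,
    mem_zmultiples_iff_exists_lt_nsmul_eq hm hmp, vadd_eq_add, nsmul_eq_mul, Nat.cast_add,
    Nat.cast_mul, ↓existsAndEq, and_true, eq_comm (a := a)]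

theorem stabilizer_Mset (hm : m ≠ 0) :
    AddAction.stabilizer (ZMod (m * p)) (Mset m p i) =
      AddSubgroup.zmultiples (p : ZMod (m * p)) := by
  rw [Mset_eq_vadd_zmultiples hm, AddAction.stabilizer_vadd_eq_right,
    AddAction.stabilizer_addSubgroup]

theorem zmultiples_le_stabilizer_jumpSet (hm : m ≠ 0) :
    AddSubgroup.zmultiples (p : ZMod (m * p)) ≤
      AddAction.stabilizer (ZMod (m * p)) (jumpSet m p) := by
  rw [jumpSet_eq_Mset_union_Mset]
  simpa only [stabilizer_Mset hm, inf_idem] using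
    AddAction.stabilizer_inf_stabilizer_le_stabilizer_union (G := ZMod (m * p))
      (s := Mset m p (p - 1)) (t := Mset m p (p + 1))

theorem sub_mem_zmultiples_of_mem_Mset {u v : ZMod (m * p)} (hu : u ∈ Mset m p i)
    (hv : v ∈ Mset m p i) : v - u ∈ AddSubgroup.zmultiples (p : ZMod (m * p)) := by
  obtain ⟨r, -, rfl⟩ := hu
  obtain ⟨t, -, rfl⟩ := hv
  refine AddSubgroup.mem_zmultiples_iff.mpr ⟨t - r, ?_⟩
  push_cast [zsmul_eq_mul]
  ring

end ResidueClasses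

theorem stmt_15_general {Γ α : Type*} [AddCommGroup Γ] {s : Set Γ} {c : Γ → α} {u v : Γ}
    (h : v - u ∈ AddAction.stabilizer Γ s) (huv : u ≠ v) (hc : c u = c v) :
    ∃ σ : Equiv.Perm Γ, IsGraphAut (SimpleGraph.circulantGraph s) σ ∧
      σ ≠ Equiv.refl Γ ∧ ∀ w, c (σ w) = c w :=
  (areTwins_circulantGraph_of_sub_mem_stabilizer h).exists_isGraphAut_ne_refl_of_label_eq huv hc

theorem stmt_15 (m p : ℕ) (hm : 2 ≤ m) (hp : 2 ≤ p) (c : ZMod (m * p) → ℕ)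
    (h : ∃ i < p, ∃ u ∈ Mset m p i, ∃ v ∈ Mset m p i, u ≠ v ∧ c u = c v) :
    ∃ σ : Equiv.Perm (ZMod (m * p)), IsGraphAut (circC m p) σ ∧
      σ ≠ Equiv.refl (ZMod (m * p)) ∧ ∀ v, c (σ v) = c v := by
  obtain ⟨i, -, u, hu, v, hv, huv, hc⟩ := h
  exact stmt_15_general
    (zmultiples_le_stabilizer_jumpSet (by omega) (sub_mem_zmultiples_of_mem_Mset hu hv)) huv hc
end
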